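/- Let N ≥ 2, s ∈ (0,1), let B ⊂ ℝ^N be an open ball centered at the origin, and let e ∈ 𝕊^{N−1}. If u and v are continuous first nontrivial eigenfunctions on B satisfying u∘σ_e = −u and v∘σ_e = −v (antisymmetry with respect to the hyperplane {x·e = 0}), then u and v are proportional: there exists c ∈ ℝ, c ≠ 0, with v = c·u in ℝ^N. In other words, for any e ∈ 𝕊^{N−1} there is at most one, modulo scaling, first nontrivial eigenfunction antisymmetric with respect to {x·e = 0}. -/

import Mathlib

open MeasureTheory Filter Topology Bornology Set
open scoped ENNReal NNReal

noncomputable section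

namespace FracNeumann

abbrev Euc (N : ℕ) : Type := EuclideanSpace ℝ (Fin N)

/-- The kernel weight `|x - y| ^ (N + 2s)`. -/
def kern (N : ℕ) (s : ℝ) (x y : Euc N) : ℝ := ‖x - y‖ ^ ((N : ℝ) + 2 * s)

/-- The region `ℝ^{2N} \ (Ω^c × Ω^c)`, where `Ω^c := ℝ^N \ closure Ω`. -/
def reg (N : ℕ) (Ω : Set (Euc N)) : Set (Euc N × Euc N) :=
  {q | q.1 ∈ closure Ω ∨ q.2 ∈ closure Ω}

/-- The squared seminorm `[u]_{H^s_{Ω,0}}²`, as an extended real number. -/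
def semiSq (N : ℕ) (s : ℝ) (Ω : Set (Euc N)) (u : Euc N → ℝ) : ℝ≥0∞ :=
  ∫⁻ q in reg N Ω, ENNReal.ofReal ((u q.1 - u q.2) ^ 2 / kern N s q.1 q.2)

/-- `∫_Ω u²`, as an extended real number. -/
def l2sq (N : ℕ) (Ω : Set (Euc N)) (u : Euc N → ℝ) : ℝ≥0∞ :=
  ∫⁻ x in Ω, ENNReal.ofReal ((u x) ^ 2)

/-- Membership in `H^s_{Ω,0}`. -/
def memHs (N : ℕ) (s : ℝ) (Ω : Set (Euc N)) (u : Euc N → ℝ) : Prop :=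
  Measurable u ∧ l2sq N Ω u < ⊤ ∧ semiSq N s Ω u < ⊤

/-- The squared Gagliardo seminorm `[u]_{H^s(Ω)}²`. -/
def semiSqOn (N : ℕ) (s : ℝ) (Ω : Set (Euc N)) (u : Euc N → ℝ) : ℝ≥0∞ :=
  ∫⁻ q in Ω ×ˢ Ω, ENNReal.ofReal ((u q.1 - u q.2) ^ 2 / kern N s q.1 q.2)

/-- Membership in `H^s(Ω)` (for functions defined on all of `ℝ^N`). -/
def memHsOn (N : ℕ) (s : ℝ) (Ω : Set (Euc N)) (u : Euc N → ℝ) : Prop :=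
  Measurable u ∧ l2sq N Ω u < ⊤ ∧ semiSqOn N s Ω u < ⊤

/-- The normalizing constant `c_{N,s}` of the fractional Laplacian. -/
def cNs (N : ℕ) (s : ℝ) : ℝ :=
  (4 : ℝ) ^ s * s * Real.Gamma ((N : ℝ) / 2 + s) /
    (Real.pi ^ ((N : ℝ) / 2) * Real.Gamma (1 - s))

/-- The nonlocal Neumann derivative `𝒩_s u`. -/
def Nneu (N : ℕ) (s : ℝ) (Ω : Set (Euc N)) (u : Euc N → ℝ) (x : Euc N) : ℝ :=
  cNs N s * ∫ y in Ω, (u x - u y) / kern N s x y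

/-- Membership in `H̃^s_{Ω,0}`: members of `H^s_{Ω,0}` with `𝒩_s u = 0` a.e. in `Ω^c`. -/
def memHsTilde (N : ℕ) (s : ℝ) (Ω : Set (Euc N)) (u : Euc N → ℝ) : Prop :=
  memHs N s Ω u ∧ ∀ᵐ x ∂(volume.restrict (closure Ω)ᶜ), Nneu N s Ω u x = 0

/-- The first nontrivial Neumann eigenvalue `μ₁^{(s)}(Ω)`. -/
def mu1 (N : ℕ) (s : ℝ) (Ω : Set (Euc N)) : ℝ :=
  sInf {t : ℝ | ∃ u : Euc N → ℝ, memHs N s Ω u ∧ (∫ x in Ω, (u x) ^ 2) = 1 ∧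
    (∫ x in Ω, u x) = 0 ∧ t = cNs N s / 2 * (semiSq N s Ω u).toReal}

/-- The bilinear form (without the constant). -/
def bform (N : ℕ) (s : ℝ) (Ω : Set (Euc N)) (u v : Euc N → ℝ) : ℝ :=
  ∫ q in reg N Ω, (u q.1 - u q.2) * (v q.1 - v q.2) / kern N s q.1 q.2

/-- First nontrivial eigenfunction: weak solution associated to `μ₁^{(s)}(Ω)`. -/
def IsFirstEigen (N : ℕ) (s : ℝ) (Ω : Set (Euc N)) (u : Euc N → ℝ) : Prop :=
  memHs N s Ω u ∧ ¬ (u =ᵐ[volume.restrict Ω] 0) ∧ (∫ x in Ω, u x) = 0 ∧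
    ∀ v : Euc N → ℝ, memHs N s Ω v →
      cNs N s / 2 * bform N s Ω u v = mu1 N s Ω * ∫ x in Ω, u x * v x

/-- Reflection `σ_e(x) = x - 2(x·e)e` across the hyperplane `{x·e = 0}`. -/
def reflect (N : ℕ) (e x : Euc N) : Euc N := x - (2 * (inner ℝ x e : ℝ)) • e

/-- The polarization `P_e u` with respect to the hyperplane `{x·e = 0}`. -/
def polarize (N : ℕ) (e : Euc N) (u : Euc N → ℝ) (x : Euc N) : ℝ :=
  if 0 ≤ (inner ℝ x e : ℝ) then min (u x) (u (reflect N e x))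
  else max (u x) (u (reflect N e x))

/-- Foliated Schwarz symmetry with respect to `p`. -/
def FoliatedSchwarz (N : ℕ) (p : Euc N) (u : Euc N → ℝ) : Prop :=
  ∃ uh : ℝ → ℝ → ℝ, (∀ r : ℝ, AntitoneOn (uh r) (Icc 0 Real.pi)) ∧
    ∀ x : Euc N, x ≠ 0 → u x = uh ‖x‖ (Real.arccos ((inner ℝ x p : ℝ) / ‖x‖))

/-- Radial symmetry (pointwise). -/
def Radial (N : ℕ) (u : Euc N → ℝ) : Prop := ∃ f : ℝ → ℝ, ∀ x, u x = f ‖x‖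

/-- Radial symmetry (a.e.). -/
def RadialAE (N : ℕ) (u : Euc N → ℝ) : Prop :=
  ∃ f : ℝ → ℝ, ∀ᵐ x : Euc N ∂volume, u x = f ‖x‖

/-- The set `{x ∈ Ω : u x ≠ 0}` has exactly two connected components. -/
def TwoNodal (N : ℕ) (Ω : Set (Euc N)) (u : Euc N → ℝ) : Prop :=
  Nat.card (ConnectedComponents {x : Euc N // x ∈ Ω ∧ u x ≠ 0}) = 2

/-- Bounded Lipschitz domain: open, bounded, connected, and near every boundary point the set
is the region above the graph of a Lipschitz function in some direction `e`. -/
def IsLipschitzDomain (N : ℕ) (Ω : Set (Euc N)) : Prop :=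
  IsOpen Ω ∧ IsBounded Ω ∧ IsConnected Ω ∧
    ∀ x ∈ frontier Ω, ∃ e : Euc N, ‖e‖ = 1 ∧ ∃ r : ℝ, 0 < r ∧
      ∃ (L : NNReal) (f : Euc N → ℝ), LipschitzWith L f ∧
        ∀ y ∈ Metric.ball x r,
          (y ∈ Ω ↔ f (y - ((inner ℝ y e : ℝ)) • e) < (inner ℝ y e : ℝ))

/-- `g` is a weak gradient of `u` in `Ω`, square-integrable on `Ω`. -/
def IsWeakGradient (N : ℕ) (Ω : Set (Euc N)) (u : Euc N → ℝ) (g : Euc N → Euc N) : Prop :=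
  Measurable g ∧ (∫⁻ x in Ω, ENNReal.ofReal (‖g x‖ ^ 2)) < ⊤ ∧
    ∀ φ : Euc N → ℝ, ContDiff ℝ (⊤ : ℕ∞) φ → HasCompactSupport φ → tsupport φ ⊆ Ω →
      ∀ i : Fin N, (∫ x in Ω, u x * fderiv ℝ φ x (EuclideanSpace.single i 1)) =
        - ∫ x in Ω, g x i * φ x

/-- Membership in `H¹(Ω)`. -/
def memH1 (N : ℕ) (Ω : Set (Euc N)) (u : Euc N → ℝ) : Prop :=
  Measurable u ∧ l2sq N Ω u < ⊤ ∧ ∃ g, IsWeakGradient N Ω u g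

/-- `∫_Ω |∇u|²`, as an extended real number. -/
def gradSq (N : ℕ) (Ω : Set (Euc N)) (u : Euc N → ℝ) : ℝ≥0∞ :=
  ⨅ (g : Euc N → Euc N) (_ : IsWeakGradient N Ω u g), ∫⁻ x in Ω, ENNReal.ofReal (‖g x‖ ^ 2)

/-- Rayleigh quotient for the fractional Neumann problem. -/
def rayleighS (N : ℕ) (s : ℝ) (Ω : Set (Euc N)) (u : Euc N → ℝ) : ℝ≥0∞ :=
  ENNReal.ofReal (cNs N s / 2) * semiSq N s Ω u / l2sq N Ω u

/-- Rayleigh quotient for the local Neumann problem. -/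
def rayleigh1 (N : ℕ) (Ω : Set (Euc N)) (u : Euc N → ℝ) : ℝ≥0∞ :=
  gradSq N Ω u / l2sq N Ω u

/-- The min-max value `μ_n^{(s)}(Ω)` over `n`-dimensional subspaces of `H^s_{Ω,0} ∩ L²₀(Ω)`. -/
def muNs (N : ℕ) (s : ℝ) (Ω : Set (Euc N)) (n : ℕ) : ℝ≥0∞ :=
  ⨅ (A : Submodule ℝ (Euc N → ℝ)) (_ : Module.finrank ℝ A = n ∧
      (∀ u ∈ A, memHs N s Ω u ∧ (∫ x in Ω, u x) = 0) ∧
      (∀ u ∈ A, u =ᵐ[(volume : Measure (Euc N))] 0 → u = 0)),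
    ⨆ (u : Euc N → ℝ) (_ : u ∈ A ∧ u ≠ 0), rayleighS N s Ω u

/-- The min-max value over `n`-dimensional subspaces of `H̃^s_{Ω,0} ∩ L²₀(Ω)`. -/
def muNsTilde (N : ℕ) (s : ℝ) (Ω : Set (Euc N)) (n : ℕ) : ℝ≥0∞ :=
  ⨅ (A : Submodule ℝ (Euc N → ℝ)) (_ : Module.finrank ℝ A = n ∧
      (∀ u ∈ A, memHsTilde N s Ω u ∧ (∫ x in Ω, u x) = 0) ∧
      (∀ u ∈ A, u =ᵐ[(volume : Measure (Euc N))] 0 → u = 0)),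
    ⨆ (u : Euc N → ℝ) (_ : u ∈ A ∧ u ≠ 0), rayleighS N s Ω u

/-- The min-max value `μ_n^{(1)}(Ω)` over `n`-dimensional subspaces of `H¹(Ω) ∩ L²₀(Ω)`. -/
def muN1 (N : ℕ) (Ω : Set (Euc N)) (n : ℕ) : ℝ≥0∞ :=
  ⨅ (A : Submodule ℝ (Euc N → ℝ)) (_ : Module.finrank ℝ A = n ∧
      (∀ u ∈ A, memH1 N Ω u ∧ (∫ x in Ω, u x) = 0) ∧
      (∀ u ∈ A, u =ᵐ[volume.restrict Ω] 0 → u = 0)),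
    ⨆ (u : Euc N → ℝ) (_ : u ∈ A ∧ u ≠ 0), rayleigh1 N Ω u

/-- `μ_n^{(s)}(Ω)` including `μ₀^{(s)}(Ω) := 0`. -/
def muNsFull (N : ℕ) (s : ℝ) (Ω : Set (Euc N)) (n : ℕ) : ℝ≥0∞ :=
  if n = 0 then 0 else muNs N s Ω n

/-- `μ_n^{(1)}(Ω)` including `μ₀^{(1)}(Ω) := 0`. -/
def muN1Full (N : ℕ) (Ω : Set (Euc N)) (n : ℕ) : ℝ≥0∞ :=
  if n = 0 then 0 else muN1 N Ω n

/-- The squared `H^s_{Ω,0}`-seminorm of the `s`-minimal extension of `u`: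
the minimal value of `[v]²` over `v ∈ H^s_{Ω,0}` with `v = u` a.e. in `Ω`. -/
def minExtSemiSq (N : ℕ) (s : ℝ) (Ω : Set (Euc N)) (u : Euc N → ℝ) : ℝ≥0∞ :=
  ⨅ (v : Euc N → ℝ) (_ : memHs N s Ω v ∧ v =ᵐ[volume.restrict Ω] u), semiSq N s Ω v

/-- `ω_{N-1}`: volume of the unit ball of `ℝ^{N-1}`. -/
def omegaPrev (N : ℕ) : ℝ := (volume (Metric.ball (0 : Euc (N - 1)) 1)).toReal

/-- Membership in `L²₀(Ω)`. -/
def memL20 (N : ℕ) (Ω : Set (Euc N)) (u : Euc N → ℝ) : Prop :=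
  Measurable u ∧ l2sq N Ω u < ⊤ ∧ (∫ x in Ω, u x) = 0

/-- The functional `F_s` (value `+∞` outside `H^s(Ω)`). -/
def Fs (N : ℕ) (s : ℝ) (Ω : Set (Euc N)) (u : Euc N → ℝ) : ℝ≥0∞ :=
  ENNReal.ofReal (1 - s) * minExtSemiSq N s Ω u

/-- The functional `F₁` (value `+∞` outside `H¹(Ω)`). -/
def F1 (N : ℕ) (Ω : Set (Euc N)) (u : Euc N → ℝ) : ℝ≥0∞ :=
  ENNReal.ofReal (omegaPrev N / (2 * N)) * gradSq N Ω u

end FracNeumann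
namespace FracNeumann

section Aux

lemma cNs_pos (N : ℕ) (s : ℝ) (hs : s ∈ Set.Ioo (0 : ℝ) 1) : 0 < cNs N s := by
  obtain ⟨h0, h1⟩ := hs
  have g1 : 0 < Real.Gamma ((N : ℝ) / 2 + s) := Real.Gamma_pos_of_pos (by positivity)
  have g2 : 0 < Real.Gamma (1 - s) := Real.Gamma_pos_of_pos (by linarith)
  have := Real.pi_pos
  unfold cNs
  positivity

variable {N : ℕ} {s R : ℝ} {e : Euc N}

lemma kern_nonneg (x y : Euc N) : 0 ≤ kern N s x y := by
  unfold kern; positivity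

lemma measurable_kern : Measurable (fun q : Euc N × Euc N => kern N s q.1 q.2) := by
  unfold kern; fun_prop

/-- The reflection as a linear isometry. -/
def refl (e : Euc N) : Euc N ≃ₗᵢ[ℝ] Euc N := Submodule.reflection (ℝ ∙ e)ᗮ

lemma refl_apply (he : ‖e‖ = 1) (x : Euc N) : refl e x = reflect N e x := by
  unfold refl reflect
  rw [Submodule.reflection_orthogonal_apply, Submodule.reflection_singleton_apply]
  simp only [he, RCLike.ofReal_real_eq_id, id, one_pow, div_one, real_inner_comm, two_smul, two_mul,
    add_smul]
  abel

lemma refl_refl (x : Euc N) : refl e (refl e x) = x := by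
  unfold refl; simp

lemma inner_refl (he : ‖e‖ = 1) (x : Euc N) : inner ℝ (refl e x) e = - inner ℝ x e := by
  rw [refl_apply he]; unfold reflect
  rw [inner_sub_left, inner_smul_left]
  simp [real_inner_self_eq_norm_sq, he]; ring

lemma norm_sub_refl (he : ‖e‖ = 1) (x y : Euc N) :
    ‖x - refl e y‖ ^ 2 = ‖x - y‖ ^ 2 + 4 * (inner ℝ x e * inner ℝ y e) := by
  have h : x - refl e y = (x - y) + (2 * inner ℝ y e) • e := by
    rw [refl_apply he]; unfold reflect; abel
  rw [h, norm_add_sq_real, norm_smul, he, inner_smul_right, inner_sub_left]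
  simp only [Real.norm_eq_abs, mul_one, sq_abs]
  ring

/-- integrand -/
def FF (s : ℝ) (w : Euc N → ℝ) (q : Euc N × Euc N) : ℝ :=
  (w q.1 - w q.2) ^ 2 / kern N s q.1 q.2

/-- symmetrized integrand -/
def GG (s : ℝ) (e : Euc N) (w : Euc N → ℝ) (q : Euc N × Euc N) : ℝ :=
  (w q.1 - w q.2) ^ 2 / kern N s q.1 q.2 + (w q.1 + w q.2) ^ 2 / kern N s q.1 (refl e q.2)

lemma FF_nonneg (w : Euc N → ℝ) (q : Euc N × Euc N) : 0 ≤ FF s w q :=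
  div_nonneg (sq_nonneg _) (kern_nonneg _ _)

lemma measurable_FF {w : Euc N → ℝ} (hw : Measurable w) : Measurable (FF (N := N) s w) := by
  have := measurable_kern (N := N) (s := s)
  unfold FF
  exact (((hw.comp measurable_fst).sub (hw.comp measurable_snd)).pow_const 2).div this

lemma measurable_refl : Measurable (refl e) := (refl e).continuous.measurable

lemma measurable_GG {w : Euc N → ℝ} (hw : Measurable w) : Measurable (GG (N := N) s e w) := by
  have hk := measurable_kern (N := N) (s := s)
  have hk2 : Measurable (fun q : Euc N × Euc N => kern N s q.1 (refl e q.2)) := by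
    have hr : Measurable (fun q : Euc N × Euc N => refl e q.2) :=
      ((refl e).continuous.comp continuous_snd).measurable
    unfold kern
    exact (measurable_fst.sub hr).norm.pow_const _
  have a1 : Measurable (fun q : Euc N × Euc N => w q.1) := hw.comp measurable_fst
  have a2 : Measurable (fun q : Euc N × Euc N => w q.2) := hw.comp measurable_snd
  unfold GG
  exact (((a1.sub a2).pow_const 2).div hk).add (((a1.add a2).pow_const 2).div hk2)

lemma measurableSet_reg (B : Set (Euc N)) : MeasurableSet (reg N B) := by
  have h : MeasurableSet (closure B) := isClosed_closure.measurableSet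
  exact (measurable_fst h).union (measurable_snd h)

lemma closure_ball_refl (hR : 0 < R) (x : Euc N) :
    refl e x ∈ closure (Metric.ball (0 : Euc N) R) ↔ x ∈ closure (Metric.ball (0 : Euc N) R) := by
  rw [closure_ball _ hR.ne']; simp

lemma two_semiSq (hR : 0 < R) {w : Euc N → ℝ} (hw : Measurable w)
    (ha : ∀ x, w (refl e x) = - w x) :
    2 * semiSq N s (Metric.ball 0 R) w
      = ∫⁻ q in reg N (Metric.ball 0 R), ENNReal.ofReal (GG s e w q) := by
  have hmp : MeasurePreserving (Prod.map id (refl e))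
      (volume : Measure (Euc N × Euc N)) (volume : Measure (Euc N × Euc N)) :=
    (MeasurePreserving.id volume).prod (refl e).measurePreserving
  have hm : Measurable (fun q => ENNReal.ofReal (FF (N := N) s w q)) :=
    (measurable_FF hw).ennreal_ofReal
  have h1 := hmp.setLIntegral_comp_preimage (measurableSet_reg (Metric.ball 0 R)) hm
  have hpre : Prod.map id (refl e) ⁻¹' (reg N (Metric.ball 0 R)) = reg N (Metric.ball 0 R) := by
    ext q
    simp only [reg, mem_preimage, mem_setOf_eq, Prod.map_fst, Prod.map_snd, id,
      closure_ball_refl hR]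
  rw [hpre] at h1
  have h2 : semiSq N s (Metric.ball 0 R) w
    = ∫⁻ q in reg N (Metric.ball 0 R), ENNReal.ofReal (FF s w q) := rfl
  rw [two_mul]
  nth_rewrite 1 [h2]
  rw [h2, ← h1, h1, ← h1]
  nth_rewrite 1 [h1]
  rw [← lintegral_add_left hm]
  refine lintegral_congr fun q => ?_
  rw [← ENNReal.ofReal_add (FF_nonneg _ _) (FF_nonneg _ _)]
  congr 1
  simp [FF, GG, ha]

/-- antisymmetric rearrangement -/
def wbar (e : Euc N) (w : Euc N → ℝ) (x : Euc N) : ℝ :=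
  if 0 < inner ℝ x e then |w x| else -|w x|

lemma wbar_sq (w : Euc N → ℝ) (x : Euc N) : wbar e w x ^ 2 = w x ^ 2 := by
  unfold wbar; split_ifs <;> simp

lemma w_zero (he : ‖e‖ = 1) {w : Euc N → ℝ} (ha : ∀ x, w (refl e x) = - w x) {x : Euc N}
    (hx : inner ℝ x e = 0) : w x = 0 := by
  have : refl e x = x := by rw [refl_apply he]; unfold reflect; rw [hx]; simp
  have h := ha x
  rw [this] at h; linarith

lemma wbar_anti (he : ‖e‖ = 1) {w : Euc N → ℝ} (ha : ∀ x, w (refl e x) = - w x) (x : Euc N) :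
    wbar e w (refl e x) = - wbar e w x := by
  unfold wbar
  rw [inner_refl he, ha]
  rcases lt_trichotomy (inner ℝ x e) 0 with h | h | h
  · simp [h, h.le, not_lt.2 h.le]
  · simp [h, w_zero he ha h]
  · simp [h, not_lt.2 h.le]

lemma measurable_wbar {w : Euc N → ℝ} (hw : Measurable w) : Measurable (wbar e w) := by
  have h1 : Measurable fun x => |w x| := by
    simpa [Real.norm_eq_abs] using hw.norm
  refine Measurable.ite ?_ h1 h1.neg
  exact measurableSet_lt measurable_const (by fun_prop)

lemma kern_le (hs : 0 < s) {x y x' y' : Euc N} (h : ‖x - y‖ ^ 2 ≤ ‖x' - y'‖ ^ 2) :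
    kern N s x y ≤ kern N s x' y' := by
  unfold kern
  have : ‖x - y‖ ≤ ‖x' - y'‖ := by
    exact (sq_le_sq₀ (norm_nonneg _) (norm_nonneg _)).1 h
  gcongr
  
lemma kern_lt (hs : 0 < s) {x y x' y' : Euc N} (h : ‖x - y‖ ^ 2 < ‖x' - y'‖ ^ 2) :
    kern N s x y < kern N s x' y' := by
  unfold kern
  have : ‖x - y‖ < ‖x' - y'‖ := by
    exact (sq_lt_sq₀ (norm_nonneg _) (norm_nonneg _)).1 h
  exact Real.rpow_lt_rpow (norm_nonneg _) this (by positivity)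

lemma kern_pos {x y : Euc N} (h : x ≠ y) : 0 < kern N s x y := by
  unfold kern
  have : 0 < ‖x - y‖ := norm_pos_iff.2 (sub_ne_zero.2 h)
  positivity

lemma GG_eq (w : Euc N → ℝ) (q : Euc N × Euc N) : GG s e w q =
    (w q.1 ^ 2 + w q.2 ^ 2) * ((kern N s q.1 q.2)⁻¹ + (kern N s q.1 (refl e q.2))⁻¹)
     - 2 * (w q.1 * w q.2) * ((kern N s q.1 q.2)⁻¹ - (kern N s q.1 (refl e q.2))⁻¹) := by
  unfold GG; simp only [div_eq_mul_inv]; ring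

lemma GG_le (hs : 0 < s) (he : ‖e‖ = 1) {w : Euc N → ℝ} (ha : ∀ x, w (refl e x) = - w x)
    (q : Euc N × Euc N) : GG s e (wbar e w) q ≤ GG s e w q := by
  obtain ⟨x, y⟩ := q
  have hn := norm_sub_refl he x y
  by_cases hxy : x = y
  · subst hxy
    have h1 := wbar_sq (e := e) w x
    have h2 : kern N s x x = 0 ∨ True := Or.inr trivial
    apply le_of_eq
    unfold GG
    simp only [sub_self]
    congr 2
    linear_combination 4 * h1
  by_cases hxy' : x = refl e y
  · have h1 := wbar_sq (e := e) w y
    subst hxy'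
    apply le_of_eq
    unfold GG
    simp only [wbar_anti he ha, ha]
    congr 2
    · linear_combination 4 * h1
    · ring
  have k1 := kern_pos (N := N) (s := s) hxy
  have k2 := kern_pos (N := N) (s := s) hxy'
  rw [GG_eq, GG_eq]
  simp only [wbar_sq]
  have hab := abs_mul (w x) (w y)
  have l1 := le_abs_self (w x * w y)
  have l2 := neg_abs_le (w x * w y)
  rcases le_or_gt (inner ℝ x e * inner ℝ y e) 0 with h | h
  · have hk : kern N s x (refl e y) ≤ kern N s x y := kern_le hs (by rw [hn]; linarith)
    have hk' := inv_anti₀ k2 hk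
    have hw : wbar e w x * wbar e w y ≤ 0 ∧ wbar e w x * wbar e w y = -|w x * w y| := by
      have : wbar e w x * wbar e w y = -|w x * w y| := by
        rcases lt_trichotomy (inner ℝ x e) 0 with h1 | h1 | h1
        · rcases lt_trichotomy (inner ℝ y e) 0 with h2 | h2 | h2
          · nlinarith
          · simp [wbar, w_zero he ha h2]
          · rw [hab]; simp [wbar, h2, not_lt.2 h1.le]
        · simp [wbar, w_zero he ha h1]
        · rcases lt_trichotomy (inner ℝ y e) 0 with h2 | h2 | h2
          · rw [hab]; simp [wbar, h1, not_lt.2 h2.le]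
          · simp [wbar, w_zero he ha h2]
          · nlinarith
      exact ⟨by rw [this]; exact neg_nonpos.2 (abs_nonneg _), this⟩
    rw [hw.2]
    nlinarith
  · have hk : kern N s x y ≤ kern N s x (refl e y) := kern_le hs (by rw [hn]; linarith)
    have hk' := inv_anti₀ k1 hk
    have hw : wbar e w x * wbar e w y = |w x * w y| := by
      rcases pos_and_pos_or_neg_and_neg_of_mul_pos h with ⟨h1, h2⟩ | ⟨h1, h2⟩
      · rw [hab]; simp [wbar, h1, h2]
      · rw [hab]; simp [wbar, not_lt.2 h1.le, not_lt.2 h2.le]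
    rw [hw]
    nlinarith

lemma GG_lt (hs : 0 < s) (he : ‖e‖ = 1) {w : Euc N → ℝ}
    {x y : Euc N} (hx : 0 < inner ℝ x e) (hy : 0 < inner ℝ y e) (hxy : w x * w y < 0) :
    GG s e (wbar e w) (x, y) < GG s e w (x, y) := by
  have hn := norm_sub_refl he x y
  have hne : x ≠ y := by
    rintro rfl
    nlinarith [mul_self_nonneg (w x)]
  have k1 := kern_pos (N := N) (s := s) hne
  have hk : kern N s x y < kern N s x (refl e y) :=
    kern_lt hs (by rw [hn]; nlinarith [mul_pos hx hy])
  have hk' : (kern N s x (refl e y))⁻¹ < (kern N s x y)⁻¹ := (inv_lt_inv₀ (k1.trans hk) k1).2 hk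
  rw [GG_eq, GG_eq]
  simp only [wbar_sq]
  have hw : wbar e w x * wbar e w y = - (w x * w y) := by
    rw [← abs_of_neg hxy, abs_mul]; simp [wbar, hx, hy]
  rw [hw]
  nlinarith [mul_pos (neg_pos.2 hxy) (sub_pos.2 hk')]

lemma integrable_l2 {B : Set (Euc N)} {w : Euc N → ℝ} (hw : memHs N s B w) :
    Integrable (fun x => w x ^ 2) (volume.restrict B) := by
  refine ⟨(hw.1.pow_const 2).aestronglyMeasurable, ?_⟩
  rw [hasFiniteIntegral_iff_ofReal (ae_of_all _ fun x => sq_nonneg _)]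
  exact hw.2.1

lemma integrable_mul {B : Set (Euc N)} {w z : Euc N → ℝ} (hw : memHs N s B w)
    (hz : memHs N s B z) : Integrable (fun x => w x * z x) (volume.restrict B) := by
  refine ((integrable_l2 hw).add (integrable_l2 hz)).mono'
    ((hw.1.mul hz.1).aestronglyMeasurable) (ae_of_all _ fun x => ?_)
  simp only [Pi.add_apply, Real.norm_eq_abs]
  rw [abs_le]; constructor <;> nlinarith [sq_nonneg (w x + z x), sq_nonneg (w x - z x)]

lemma integrable_FF {B : Set (Euc N)} {w : Euc N → ℝ} (hw : memHs N s B w) :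
    Integrable (FF s w) (volume.restrict (reg N B)) := by
  refine ⟨(measurable_FF hw.1).aestronglyMeasurable, ?_⟩
  rw [hasFiniteIntegral_iff_ofReal (ae_of_all _ fun x => FF_nonneg _ _)]
  exact hw.2.2

lemma integrable_bf {B : Set (Euc N)} {w z : Euc N → ℝ} (hw : memHs N s B w)
    (hz : memHs N s B z) :
    Integrable (fun q : Euc N × Euc N => (w q.1 - w q.2) * (z q.1 - z q.2) / kern N s q.1 q.2)
      (volume.restrict (reg N B)) := by
  have hk := measurable_kern (N := N) (s := s)
  have hw1 := hw.1
  have hz1 := hz.1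
  refine ((integrable_FF hw).add (integrable_FF hz)).mono' ?_ (ae_of_all _ fun q => ?_)
  · exact ((((hw1.comp measurable_fst).sub (hw1.comp measurable_snd)).mul
      ((hz1.comp measurable_fst).sub (hz1.comp measurable_snd))).div hk).aestronglyMeasurable
  simp only [Pi.add_apply, Real.norm_eq_abs, FF]
  rw [abs_div, abs_of_nonneg (kern_nonneg _ _), ← add_div]
  apply div_le_div_of_nonneg_right _ (kern_nonneg _ _)
  generalize w q.1 - w q.2 = a
  generalize z q.1 - z q.2 = b
  rw [abs_le]; constructor <;> nlinarith [sq_nonneg (a + b), sq_nonneg (a - b)]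

lemma bform_self {B : Set (Euc N)} {w : Euc N → ℝ} (hw : Measurable w) :
    bform N s B w w = (semiSq N s B w).toReal := by
  have := integral_eq_lintegral_of_nonneg_ae (μ := volume.restrict (reg N B))
    (ae_of_all _ (FF_nonneg (s := s) w)) (measurable_FF hw).aestronglyMeasurable
  unfold bform semiSq
  rw [show (∫⁻ q in reg N B, ENNReal.ofReal ((w q.1 - w q.2) ^ 2 / kern N s q.1 q.2))
    = ∫⁻ q in reg N B, ENNReal.ofReal (FF s w q) from rfl, ← this]
  simp only [FF, sq]

lemma memHs_sub {B : Set (Euc N)} {w z : Euc N → ℝ} (hw : memHs N s B w)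
    (hz : memHs N s B z) (c : ℝ) : memHs N s B (fun x => w x - c * z x) := by
  have hm : Measurable (fun x => w x - c * z x) := hw.1.sub (hz.1.const_mul c)
  refine ⟨hm, ?_, ?_⟩
  · have : Integrable (fun x => (w x - c * z x) ^ 2) (volume.restrict B) := by
      refine (((integrable_l2 hw).sub ((integrable_mul hw hz).const_mul (2 * c))).add
        ((integrable_l2 hz).const_mul (c ^ 2))).congr (ae_of_all _ fun x => ?_)
      simp only [Pi.add_apply, Pi.sub_apply]; ring
    have h2 := this.2
    rw [hasFiniteIntegral_iff_ofReal (ae_of_all _ fun x => sq_nonneg _)] at h2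
    exact h2
  · have : Integrable (FF s (fun x => w x - c * z x)) (volume.restrict (reg N B)) := by
      refine (((integrable_FF hw).sub ((integrable_bf hw hz).const_mul (2 * c))).add
        ((integrable_FF hz).const_mul (c ^ 2))).congr (ae_of_all _ fun x => ?_)
      simp only [Pi.add_apply, Pi.sub_apply, FF]; ring
    have h2 := this.2
    rw [hasFiniteIntegral_iff_ofReal (ae_of_all _ fun x => FF_nonneg _ _)] at h2
    exact h2

lemma energy_sub {B : Set (Euc N)} {u v : Euc N → ℝ} (hu : IsFirstEigen N s B u)
    (hv : IsFirstEigen N s B v) (c : ℝ) :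
    cNs N s / 2 * (semiSq N s B (fun x => v x - c * u x)).toReal
      = mu1 N s B * ∫ x in B, (v x - c * u x) ^ 2 := by
  have hw := memHs_sub hv.1 hu.1 c
  have e1 := hu.2.2.2 _ hw
  have e2 := hv.2.2.2 _ hw
  rw [← bform_self hw.1]
  have h1 : bform N s B (fun x => v x - c * u x) (fun x => v x - c * u x)
      = bform N s B v (fun x => v x - c * u x) - c * bform N s B u (fun x => v x - c * u x) := by
    unfold bform
    rw [← integral_const_mul, ← integral_sub (integrable_bf hv.1 hw)
      ((integrable_bf hu.1 hw).const_mul c)]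
    congr 1; ext q; ring
  have h2 : ∫ x in B, (v x - c * u x) ^ 2
      = (∫ x in B, v x * (v x - c * u x)) - c * ∫ x in B, u x * (v x - c * u x) := by
    rw [← integral_const_mul, ← integral_sub (integrable_mul hv.1 hw)
      ((integrable_mul hu.1 hw).const_mul c)]
    congr 1; ext q; ring
  rw [h1, h2]
  linear_combination e2 - c * e1

lemma semiSq_smul {B : Set (Euc N)} (w : Euc N → ℝ) (k : ℝ) :
    semiSq N s B (fun x => k * w x) = ENNReal.ofReal (k ^ 2) * semiSq N s B w := by
  unfold semiSq
  rw [← lintegral_const_mul' _ _ ENNReal.ofReal_ne_top]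
  refine lintegral_congr fun q => ?_
  rw [← ENNReal.ofReal_mul (sq_nonneg k)]
  congr 1; ring

lemma l2sq_smul {B : Set (Euc N)} (w : Euc N → ℝ) (k : ℝ) :
    l2sq N B (fun x => k * w x) = ENNReal.ofReal (k ^ 2) * l2sq N B w := by
  unfold l2sq
  rw [← lintegral_const_mul' _ _ ENNReal.ofReal_ne_top]
  refine lintegral_congr fun q => ?_
  rw [← ENNReal.ofReal_mul (sq_nonneg k)]
  congr 1; ring

lemma mu1_le (hc : 0 < cNs N s) {B : Set (Euc N)} {w : Euc N → ℝ} (hw : memHs N s B w)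
    (h0 : ∫ x in B, w x = 0) (hA : 0 < ∫ x in B, w x ^ 2) :
    mu1 N s B * ∫ x in B, w x ^ 2 ≤ cNs N s / 2 * (semiSq N s B w).toReal := by
  set A := ∫ x in B, w x ^ 2 with hAdef
  have hk : ((Real.sqrt A)⁻¹) ^ 2 = A⁻¹ := by rw [inv_pow, Real.sq_sqrt hA.le]
  set k := (Real.sqrt A)⁻¹
  have hle : mu1 N s B ≤ cNs N s / 2 * (semiSq N s B (fun x => k * w x)).toReal := by
    refine csInf_le ⟨0, ?_⟩ ⟨fun x => k * w x, ⟨hw.1.const_mul k, ?_, ?_⟩, ?_, ?_, rfl⟩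
    · rintro t ⟨z, -, -, -, rfl⟩
      have := (ENNReal.toReal_nonneg (a := semiSq N s B z))
      positivity
    · rw [l2sq_smul]; exact ENNReal.mul_lt_top ENNReal.ofReal_lt_top hw.2.1
    · rw [semiSq_smul]; exact ENNReal.mul_lt_top ENNReal.ofReal_lt_top hw.2.2
    · simp only [mul_pow]
      rw [integral_const_mul, hk, ← hAdef]; exact inv_mul_cancel₀ hA.ne'
    · rw [integral_const_mul, h0, mul_zero]
  rw [semiSq_smul, ENNReal.toReal_mul, ENNReal.toReal_ofReal (sq_nonneg k), hk] at hle
  calc _ ≤ (cNs N s / 2 * (A⁻¹ * (semiSq N s B w).toReal)) * A := by gcongr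
    _ = _ := by field_simp

lemma integral_anti (z : Euc N → ℝ) (hz : ∀ x, z (refl e x) = - z x) :
    ∫ x in Metric.ball (0 : Euc N) R, z x = 0 := by
  have h := (refl e).measurePreserving.setIntegral_preimage_emb
    (refl e).toHomeomorph.measurableEmbedding z (Metric.ball 0 R)
  have hp : (refl e) ⁻¹' (Metric.ball (0 : Euc N) R) = Metric.ball 0 R := by
    ext x; simp
  rw [hp] at h
  simp only [hz] at h
  rw [integral_neg] at h
  linarith

lemma sign_lemma (hs : s ∈ Set.Ioo (0 : ℝ) 1) (hR : 0 < R) (he : ‖e‖ = 1) {w : Euc N → ℝ}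
    (hc : Continuous w) (hm : memHs N s (Metric.ball 0 R) w) (ha : ∀ x, w (refl e x) = - w x)
    (hE : cNs N s / 2 * (semiSq N s (Metric.ball 0 R) w).toReal
      = mu1 N s (Metric.ball 0 R) * ∫ x in Metric.ball 0 R, w x ^ 2) :
    (∀ y, 0 < inner ℝ y e → 0 ≤ w y) ∨ (∀ y, 0 < inner ℝ y e → w y ≤ 0) := by
  have hcN := cNs_pos N s hs
  by_cases hz : ∀ x ∈ Metric.ball (0 : Euc N) R, w x = 0
  · -- w vanishes on the ball, hence everywhere
    left
    intro y hy
    by_contra hneg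
    push Not at hneg
    have hA : ∫ x in Metric.ball (0 : Euc N) R, w x ^ 2 = 0 := by
      rw [setIntegral_congr_fun (g := fun _ => 0) Metric.isOpen_ball.measurableSet]
      · simp
      · intro x hx; simp [hz x hx]
    rw [hA, mul_zero] at hE
    have h0 : semiSq N s (Metric.ball 0 R) w = 0 := by
      have : (semiSq N s (Metric.ball 0 R) w).toReal = 0 := by
        rcases mul_eq_zero.1 hE with h | h
        · linarith
        · exact h
      rcases (ENNReal.toReal_eq_zero_iff _).1 this with h | h
      · exact h
      · exact absurd h hm.2.2.ne
    have h1 := (lintegral_eq_zero_iff (measurable_FF (s := s) hm.1).ennreal_ofReal).1 h0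
    rw [Filter.EventuallyEq, ae_restrict_iff' (measurableSet_reg _), ae_iff] at h1
    have hopen : IsOpen ((Metric.ball (0 : Euc N) R) ×ˢ {y : Euc N | w y < 0}) :=
      Metric.isOpen_ball.prod (isOpen_lt hc continuous_const)
    have hpos := hopen.measure_pos volume ⟨(0, y), by simp [hR], hneg⟩
    refine hpos.ne' (measure_mono_null ?_ h1)
    rintro ⟨a, b⟩ ⟨h3, h4⟩
    simp only [mem_setOf_eq] at h3 h4 ⊢
    intro h5
    have h6 := h5 (Or.inl (subset_closure h3))
    simp only [Pi.zero_apply, ENNReal.ofReal_eq_zero, FF] at h6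
    rw [hz a h3] at h6
    have hne : a ≠ b := by
      rintro rfl
      rw [hz a h3] at h4; exact lt_irrefl _ h4
    have : 0 < (0 - w b) ^ 2 / kern N s a b := div_pos (by nlinarith) (kern_pos hne)
    linarith
  push Not at hz
  obtain ⟨x1, hx1, hwx1⟩ := hz
  have hA : 0 < ∫ x in Metric.ball (0 : Euc N) R, w x ^ 2 := by
    rw [setIntegral_pos_iff_support_of_nonneg_ae (ae_of_all _ fun x => sq_nonneg _)
      (integrable_l2 hm)]
    refine lt_of_lt_of_le ((Metric.isOpen_ball.inter (isOpen_ne_fun hc continuous_const)).measure_pos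
      volume ⟨x1, hx1, hwx1⟩) (measure_mono ?_)
    rintro x ⟨h1, h2⟩
    exact ⟨by simpa using h2, h1⟩
  obtain ⟨x0, hx0, hx0e, hwx0⟩ : ∃ x0 ∈ Metric.ball (0 : Euc N) R, 0 < inner ℝ x0 e ∧ w x0 ≠ 0 := by
    rcases lt_trichotomy (inner ℝ x1 e) 0 with h | h | h
    · refine ⟨refl e x1, by simpa using hx1, by rw [inner_refl he]; linarith, ?_⟩
      rw [ha]; simpa using hwx1
    · exact absurd (w_zero he ha h) hwx1
    · exact ⟨x1, hx1, h, hwx1⟩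
  have hmb := measurable_wbar (e := e) hm.1
  have t1 := two_semiSq (s := s) hR hm.1 ha
  have t2 := two_semiSq (s := s) hR hmb (wbar_anti he ha)
  have hle : ∀ q, ENNReal.ofReal (GG s e (wbar e w) q) ≤ ENNReal.ofReal (GG s e w q) :=
    fun q => ENNReal.ofReal_le_ofReal (GG_le hs.1 he ha q)
  have hle2 : semiSq N s (Metric.ball 0 R) (wbar e w) ≤ semiSq N s (Metric.ball 0 R) w := by
    have : 2 * semiSq N s (Metric.ball 0 R) (wbar e w) ≤ 2 * semiSq N s (Metric.ball 0 R) w := by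
      rw [t1, t2]; exact lintegral_mono hle
    exact (ENNReal.mul_le_mul_iff_right two_ne_zero ENNReal.ofNat_ne_top).1 this
  have hmemb : memHs N s (Metric.ball 0 R) (wbar e w) := by
    refine ⟨hmb, ?_, lt_of_le_of_lt hle2 hm.2.2⟩
    have := hm.2.1
    unfold l2sq at this ⊢
    simpa only [wbar_sq] using this
  have hmu := mu1_le hcN hmemb (integral_anti _ (wbar_anti he ha)) (by simpa only [wbar_sq] using hA)
  simp only [wbar_sq] at hmu
  rw [← hE] at hmu
  have hge : semiSq N s (Metric.ball 0 R) w ≤ semiSq N s (Metric.ball 0 R) (wbar e w) := by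
    rw [← ENNReal.toReal_le_toReal hm.2.2.ne hmemb.2.2.ne]
    exact le_of_mul_le_mul_left hmu (by positivity)
  have hGm : Measurable (GG s e w) := measurable_GG hm.1
  have hae := ae_eq_of_ae_le_of_lintegral_le (μ := volume.restrict (reg N (Metric.ball 0 R)))
    (ae_of_all _ hle) (by rw [← t2]; exact ENNReal.mul_ne_top ENNReal.ofNat_ne_top hmemb.2.2.ne)
    hGm.ennreal_ofReal.aemeasurable (by rw [← t1, ← t2]; gcongr)
  rw [Filter.EventuallyEq, ae_restrict_iff' (measurableSet_reg _), ae_iff] at hae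
  have key : ∀ y, 0 < inner ℝ y e → 0 ≤ w x0 * w y := by
    intro y hy
    by_contra hneg
    push Not at hneg
    have hopen : IsOpen {q : Euc N × Euc N | q.1 ∈ Metric.ball (0 : Euc N) R ∧
        0 < inner ℝ q.1 e ∧ 0 < inner ℝ q.2 e ∧ w q.1 * w q.2 < 0} := by
      have c1 : Continuous fun q : Euc N × Euc N => (inner ℝ q.1 e : ℝ) := by fun_prop
      have c2 : Continuous fun q : Euc N × Euc N => (inner ℝ q.2 e : ℝ) := by fun_prop
      have c3 : Continuous fun q : Euc N × Euc N => w q.1 * w q.2 := by fun_prop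
      exact (Metric.isOpen_ball.preimage continuous_fst).inter
        ((isOpen_lt continuous_const c1).inter
        ((isOpen_lt continuous_const c2).inter (isOpen_lt c3 continuous_const)))
    have hpos := hopen.measure_pos volume ⟨(x0, y), hx0, hx0e, hy, hneg⟩
    refine hpos.ne' (measure_mono_null ?_ hae)
    rintro ⟨a, b⟩ ⟨h1, h2, h3, h4⟩
    simp only [mem_setOf_eq] at h1 h2 h3 h4 ⊢
    intro h5
    have h6 := h5 (Or.inl (subset_closure h1))
    have h7 := GG_lt hs.1 he h2 h3 h4 (s := s)
    have h8 : 0 ≤ GG s e (wbar e w) (a, b) := by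
      unfold GG
      exact add_nonneg (div_nonneg (sq_nonneg _) (kern_nonneg _ _))
        (div_nonneg (sq_nonneg _) (kern_nonneg _ _))
    rw [ENNReal.ofReal_eq_ofReal_iff h8 (h8.trans h7.le)] at h6
    linarith
  rcases lt_or_gt_of_ne hwx0 with h | h
  · right; intro y hy; have := key y hy; by_contra h'; push Not at h'; nlinarith
  · left; intro y hy; have := key y hy; by_contra h'; push Not at h'; nlinarith

end Aux

/-- Proposition 4.6: for any unit direction `e`, there is at most one
(modulo scaling) first nontrivial eigenfunction in a ball antisymmetric w.r.t. `{x·e = 0}`. -/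
theorem statement17 (N : ℕ) (hN : 2 ≤ N) (s : ℝ) (hs : s ∈ Set.Ioo (0 : ℝ) 1)
    (R : ℝ) (hR : 0 < R) (B : Set (Euc N)) (hB : B = Metric.ball (0 : Euc N) R)
    (e : Euc N) (he : ‖e‖ = 1)
    (u v : Euc N → ℝ)
    (hu : IsFirstEigen N s B u) (hcu : Continuous u)
    (hv : IsFirstEigen N s B v) (hcv : Continuous v)
    (hau : ∀ x : Euc N, u (reflect N e x) = - u x)
    (hav : ∀ x : Euc N, v (reflect N e x) = - v x) :
    ∃ c : ℝ, c ≠ 0 ∧ ∀ x : Euc N, v x = c * u x := by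
  subst hB
  have hau' : ∀ x, u (refl e x) = - u x := fun x => by rw [refl_apply he]; exact hau x
  have hav' : ∀ x, v (refl e x) = - v x := fun x => by rw [refl_apply he]; exact hav x
  have hsign : ∀ c : ℝ, (∀ y, 0 < inner ℝ y e → 0 ≤ v y - c * u y) ∨
      (∀ y, 0 < inner ℝ y e → v y - c * u y ≤ 0) := by
    intro c
    refine sign_lemma hs hR he (w := fun x => v x - c * u x) (by fun_prop)
      (memHs_sub hv.1 hu.1 c) (fun x => ?_) (energy_sub hu hv c)
    rw [hau', hav']; ring
  obtain ⟨x1, hx1⟩ : ∃ x, u x ≠ 0 := by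
    by_contra h
    push Not at h
    exact hu.2.1 (ae_of_all _ h)
  obtain ⟨x0, hx0e, hux0⟩ : ∃ x0, 0 < inner ℝ x0 e ∧ u x0 ≠ 0 := by
    rcases lt_trichotomy (inner ℝ x1 e) 0 with h | h | h
    · refine ⟨refl e x1, by rw [inner_refl he]; linarith, ?_⟩
      rw [hau']; simpa using hx1
    · exact absurd (w_zero he hau' h) hx1
    · exact ⟨x1, h, hx1⟩
  set c := v x0 / u x0 with hc
  have hvx0 : v x0 = c * u x0 := by rw [hc]; field_simp
  have hpos : ∀ y, 0 < inner ℝ y e → v y = c * u y := by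
    intro y hy
    by_contra hne
    set d := v y - c * u y with hd
    have hd0 : d ≠ 0 := sub_ne_zero.2 hne
    set t : ℝ := 1 / (1 + |u x0 * u y|) with ht
    have hden : 0 < 1 + |u x0 * u y| := by positivity
    have htpos : 0 < t := by positivity
    have ht1 : 0 < 1 - t * (u x0 * u y) := by
      have h1 : t * (1 + |u x0 * u y|) = 1 := by rw [ht]; field_simp
      have h2 := mul_le_mul_of_nonneg_left (le_abs_self (u x0 * u y)) htpos.le
      nlinarith
    have hx : v x0 - (c + t * d * u x0) * u x0 = - (d * (t * u x0 ^ 2)) := by rw [hvx0]; ring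
    have hy' : v y - (c + t * d * u x0) * u y = d * (1 - t * (u x0 * u y)) := by
      linear_combination -hd
    have p : 0 < t * u x0 ^ 2 := by positivity
    rcases hsign (c + t * d * u x0) with h | h
    · have a := h x0 hx0e
      have b := h y hy
      rw [hx] at a; rw [hy'] at b
      have b' := nonneg_of_mul_nonneg_left b ht1
      have := mul_pos (lt_of_le_of_ne b' hd0.symm) p
      linarith
    · have a := h x0 hx0e
      have b := h y hy
      rw [hx] at a; rw [hy'] at b
      have b' : d ≤ 0 := by
        by_contra hh
        push Not at hh
        have := mul_pos hh ht1
        linarith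
      have := mul_neg_of_neg_of_pos (lt_of_le_of_ne b' hd0) p
      linarith
  have hall : ∀ x, v x = c * u x := by
    intro x
    rcases lt_trichotomy (inner ℝ x e) 0 with h | h | h
    · have := hpos (refl e x) (by rw [inner_refl he]; linarith)
      rw [hau', hav'] at this; linarith
    · rw [w_zero he hau' h, w_zero he hav' h, mul_zero]
    · exact hpos x h
  refine ⟨c, fun h0 => hv.2.1 (ae_of_all _ fun x => ?_), hall⟩
  rw [hall x, h0]; simp

end FracNeumann
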